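/- Let X be a geodesic metric space with basepoint o, let G be a countable group acting on X by isometries containing two independent contracting isometries, and let μ be a non-elementary probability measure on G with L(μ) < ∞. Then there exist constants C > 0 and ε > 0 such that for every probability measure μ' on G with ‖μ' − μ‖_{0,1} < ε one has |l(μ') − l(μ)| ≤ C·‖μ' − μ‖_{0,1}. -/

import Mathlib

open Filter Topology Pointwise

/-- `f` parametrizes a geodesic from `x` to `y` by arclength on `[0, dist x y]`. -/
def IsGeodesicSegment {X : Type*} [MetricSpace X] (f : ℝ → X) (x y : X) : Prop :=
  f 0 = x ∧ f (dist x y) = y ∧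
    ∀ s ∈ Set.Icc (0 : ℝ) (dist x y), ∀ t ∈ Set.Icc (0 : ℝ) (dist x y),
      dist (f s) (f t) = |s - t|

/-- `X` is a geodesic metric space: any two points are joined by a geodesic. -/
def IsGeodesicSpace (X : Type*) [MetricSpace X] : Prop :=
  ∀ x y : X, ∃ f : ℝ → X, IsGeodesicSegment f x y

/-- Nearest-point projection of `x` to the set `A`. -/
def projSet {X : Type*} [MetricSpace X] (A : Set X) (x : X) : Set X :=
  {a ∈ A | dist x a = Metric.infDist x A}

/-- Nearest-point projection of the set `B` to the set `A`. -/
def projSetOf {X : Type*} [MetricSpace X] (A B : Set X) : Set X :=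
  ⋃ x ∈ B, projSet A x

/-- A `K`-quasigeodesic indexed by `ℤ`. -/
def IsQuasigeodesicZ {X : Type*} [MetricSpace X] (K : ℝ) (γ : ℤ → X) : Prop :=
  ∀ s t : ℤ, |(s : ℝ) - (t : ℝ)| / K - K ≤ dist (γ s) (γ t) ∧
    dist (γ s) (γ t) ≤ K * |(s : ℝ) - (t : ℝ)| + K

/-- A `K`-contracting axis indexed by `ℤ`: a `K`-quasigeodesic such that every geodesic
staying `K`-far from it has nearest-point projection of diameter `< K`. -/
def IsContractingAxisZ {X : Type*} [MetricSpace X] (K : ℝ) (γ : ℤ → X) : Prop :=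
  IsQuasigeodesicZ K γ ∧
    ∀ (f : ℝ → X) (x y : X), IsGeodesicSegment f x y →
      (∀ t ∈ Set.Icc (0 : ℝ) (dist x y), K ≤ Metric.infDist (f t) (Set.range γ)) →
      EMetric.diam (projSetOf (Set.range γ) (f '' Set.Icc (0 : ℝ) (dist x y)))
        < ENNReal.ofReal K

/-- The `ℤ`-orbit of the basepoint `o` under powers of `g`. -/
def zorbit {G X : Type*} [Group G] [MetricSpace X] [MulAction G X] (o : X) (g : G) : Set X :=
  Set.range fun i : ℤ => g ^ i • o

/-- `g` is a contracting isometry: its orbit map `i ↦ g^i • o` is a `K`-contracting axis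
for some `K > 1`. -/
def IsContractingIsom {G X : Type*} [Group G] [MetricSpace X] [MulAction G X]
    (o : X) (g : G) : Prop :=
  ∃ K : ℝ, 1 < K ∧ IsContractingAxisZ K fun i : ℤ => g ^ i • o

/-- `g` and `h` are independent contracting isometries: both are contracting, and the
nearest-point projections of each orbit to the other are bounded. -/
def IndependentPair {G X : Type*} [Group G] [MetricSpace X] [MulAction G X]
    (o : X) (g h : G) : Prop :=
  IsContractingIsom o g ∧ IsContractingIsom o h ∧
    Bornology.IsBounded (projSetOf (zorbit o g) (zorbit o h)) ∧
    Bornology.IsBounded (projSetOf (zorbit o h) (zorbit o g))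

/-- `G` contains two independent contracting isometries of `X`. -/
def HasIndepContracting (G : Type*) {X : Type*} [Group G] [MetricSpace X] [MulAction G X]
    (o : X) : Prop :=
  ∃ g h : G, IndependentPair o g h

/-- `μ` is a probability measure on the countable group `G`. -/
def IsProbMeasure {G : Type*} (μ : G → ℝ) : Prop :=
  (∀ g, 0 ≤ μ g) ∧ Summable μ ∧ ∑' g, μ g = 1

/-- Convolution of two (signed) measures on `G`. -/
noncomputable def conv {G : Type*} [Group G] (μ ν : G → ℝ) : G → ℝ :=
  fun g => ∑' h : G, μ h * ν (h⁻¹ * g)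

/-- `n`-fold convolution power of `μ`, with `convPow μ 0` the point mass at the identity. -/
noncomputable def convPow {G : Type*} [Group G] (μ : G → ℝ) : ℕ → G → ℝ
  | 0 => ({1} : Set G).indicator fun _ => (1 : ℝ)
  | n + 1 => conv μ (convPow μ n)

/-- First moment `L(μ) = ∑_g μ(g) d(o, g o)`. -/
noncomputable def firstMoment {G X : Type*} [Group G] [MetricSpace X] [MulAction G X]
    (o : X) (μ : G → ℝ) : ℝ :=
  ∑' g : G, μ g * dist o (g • o)

/-- `μ` has finite first moment. -/
def HasFiniteFirstMoment {G X : Type*} [Group G] [MetricSpace X] [MulAction G X]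
    (o : X) (μ : G → ℝ) : Prop :=
  Summable fun g : G => μ g * dist o (g • o)

/-- The escape rate `l(μ) = lim_n L(μ^{*n})/n`; by subadditivity of `n ↦ L(μ^{*n})`
(Fekete), the limit equals the infimum. -/
noncomputable def escapeRate {G X : Type*} [Group G] [MetricSpace X] [MulAction G X]
    (o : X) (μ : G → ℝ) : ℝ :=
  ⨅ n : ℕ, firstMoment o (convPow μ (n + 1)) / (n + 1 : ℝ)

/-- `μ` is non-elementary: the sub-semigroup generated by its support contains
two independent contracting isometries. -/
def NonElementary {G X : Type*} [Group G] [MetricSpace X] [MulAction G X]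
    (o : X) (μ : G → ℝ) : Prop :=
  ∃ g h : G, g ∈ Subsemigroup.closure {x : G | 0 < μ x} ∧
    h ∈ Subsemigroup.closure {x : G | 0 < μ x} ∧ IndependentPair o g h

/-- The norm `‖η‖₀ + ‖η‖₁ = ∑_g (1 + d(o, g o))|η(g)|`, valued in `ℝ≥0∞` so that
finiteness is recorded. -/
noncomputable def enorm01 {G X : Type*} [Group G] [MetricSpace X] [MulAction G X]
    (o : X) (η : G → ℝ) : ENNReal :=
  ∑' g : G, ENNReal.ofReal ((1 + dist o (g • o)) * |η g|)

/-!
Replacing the steps of the walk one at a time shows that changing the law of one step changes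
`L(μ^{*n})` by at most a multiple of `‖μ' - μ‖_{0,1}`, as soon as the mean of the excess
`d(x, o) + d(o, g o) - d(x, g o)` for `g` of law `μ^{*n}` is bounded uniformly in `n` and `x`.

To bound this mean, pass to a convolution power of `μ` and split off from it a uniform choice among
16 Schottky elements `s i`: the excess between `x` and `s i • y` is bounded unless `i` is the one
index that is bad for `x` or the one that is bad for `y`. Along a trajectory, keep a weight `α`
determined by the past and a weight `β` determined by the future, divided by 4 at each Schottky step
that is not bad on their side and multiplied by 4 at each one that is. Both decay exponentially in
mean, since 15 choices out of 16 are not bad. Before the first step that is bad on neither side,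
`α * β ≥ 1`, so `α + β ≥ 1`. Hence the excess is at most a constant plus the sum of
`2 * d(o, s o) * (α + β)` over all steps `s`, which has bounded mean.

The Schottky elements are `a ^ i * f * a ^ (16 - i)` for large powers `a` and `f` of independent
contracting isometries. The translates of the axis of `f` by powers of `a` project to bounded sets
on each other, so the Behrstock inequality bounds the number of bad indices.
-/

section Probability

open scoped ENNReal

variable {α β σ τ : Type*}

/-- Expectation of a `[0, ∞]`-valued function under a discrete law. -/
noncomputable def lmean (p : PMF α) (f : α → ℝ≥0∞) : ℝ≥0∞ :=
  ∑' a, p a * f a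

theorem lmean_mono (p : PMF α) {f f' : α → ℝ≥0∞} (h : ∀ a, f a ≤ f' a) :
    lmean p f ≤ lmean p f' :=
  ENNReal.tsum_le_tsum fun a => mul_le_mul_right (h a) _

theorem lmean_const (p : PMF α) (c : ℝ≥0∞) : lmean p (fun _ => c) = c := by
  rw [lmean, ENNReal.tsum_mul_right, p.tsum_coe, one_mul]

theorem lmean_add (p : PMF α) (f f' : α → ℝ≥0∞) :
    lmean p (fun a => f a + f' a) = lmean p f + lmean p f' := by
  simp only [lmean, mul_add, ENNReal.tsum_add]

theorem lmean_const_mul (p : PMF α) (c : ℝ≥0∞) (f : α → ℝ≥0∞) :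
    lmean p (fun a => c * f a) = c * lmean p f := by
  simp only [lmean, mul_left_comm _ c, ENNReal.tsum_mul_left]

theorem lmean_pure (a : α) (f : α → ℝ≥0∞) : lmean (PMF.pure a) f = f a := by
  rw [lmean, tsum_eq_single a fun b hb => by simp [PMF.pure_apply, hb]]
  simp [PMF.pure_apply]

theorem lmean_bind (p : PMF α) (q : α → PMF β) (f : β → ℝ≥0∞) :
    lmean (p.bind q) f = lmean p fun a => lmean (q a) f := by
  simp only [lmean, PMF.bind_apply, ← ENNReal.tsum_mul_right, ← ENNReal.tsum_mul_left, mul_assoc]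
  exact ENNReal.tsum_comm

theorem lmean_map (p : PMF α) (u : α → β) (f : β → ℝ≥0∞) :
    lmean (p.map u) f = lmean p fun a => f (u a) := by
  rw [← PMF.bind_pure_comp, lmean_bind]
  simp only [Function.comp_apply, lmean_pure]

theorem lmean_comm (p : PMF α) (q : PMF β) (f : α → β → ℝ≥0∞) :
    lmean p (fun a => lmean q (f a)) = lmean q fun b => lmean p fun a => f a b := by
  simp only [lmean, ← ENNReal.tsum_mul_left]
  rw [ENNReal.tsum_comm]
  simp only [mul_left_comm]

theorem tsum_pmf_tsub_comm (p q : PMF α) : ∑' a, (p a - q a) = ∑' a, (q a - p a) := by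
  have mass (p q : PMF α) : ∑' a, (p a - q a) + ∑' a, min (p a) (q a) = 1 := by
    simp only [← ENNReal.tsum_add, tsub_add_min, p.tsum_coe]
  have min_ne_top : ∑' a, min (p a) (q a) ≠ ∞ :=
    ne_top_of_le_ne_top p.tsum_coe_ne_top (ENNReal.tsum_le_tsum fun a => min_le_left _ _)
  refine (ENNReal.add_left_inj min_ne_top).1 ((mass p q).trans ?_)
  simp only [← mass q p, min_comm]

/-- The total variation distance `∑ a, w a * |p a - q a|` of two laws with weight `w`. The absolute
value is written as a sum of two truncated differences. -/
noncomputable def weightedDist (w : α → ℝ≥0∞) (p q : PMF α) : ℝ≥0∞ :=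
  ∑' a, (p a - q a + (q a - p a)) * w a

theorem weightedDist_comm (w : α → ℝ≥0∞) (p q : PMF α) :
    weightedDist w p q = weightedDist w q p := by
  simp only [weightedDist, add_comm]

-- As `p` and `q` have equal mass, the constant `c` may be moved from the positive part of `p - q`
-- to its negative part.
theorem lmean_le_lmean_add_weightedDist (p q : PMF α) {φ w : α → ℝ≥0∞} {c : ℝ≥0∞}
    (hle : ∀ a, φ a ≤ c + w a) (hge : ∀ a, c ≤ φ a + w a) :
    lmean p φ ≤ lmean q φ + weightedDist w p q := by
  have split (p q : PMF α) : lmean p φ =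
      ∑' a, (p a - q a) * φ a + ∑' a, min (p a) (q a) * φ a := by
    simp only [← ENNReal.tsum_add, ← add_mul, tsub_add_min, lmean]
  calc lmean p φ = ∑' a, (p a - q a) * φ a + ∑' a, min (p a) (q a) * φ a := split p q
    _ ≤ ∑' a, (p a - q a) * (c + w a) + ∑' a, min (p a) (q a) * φ a := by
      gcongr with a; exact hle a
    _ = ∑' a, (q a - p a) * c + ∑' a, (p a - q a) * w a + ∑' a, min (p a) (q a) * φ a := by
      simp only [mul_add, ENNReal.tsum_add, ENNReal.tsum_mul_right, tsum_pmf_tsub_comm p q]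
    _ ≤ ∑' a, (q a - p a) * (φ a + w a) + ∑' a, (p a - q a) * w a +
        ∑' a, min (p a) (q a) * φ a := by
      gcongr with a; exact hge a
    _ = lmean q φ + weightedDist w p q := by
      simp only [split q p, weightedDist, mul_add, add_mul, ENNReal.tsum_add, min_comm]
      ring

theorem exists_sum_ite_le {ι : Type*} [Fintype ι] [Nonempty ι] [DecidableEq α] (p : PMF α)
    (s : ι → α) (hs : ∀ i, s i ∈ p.support) :
    ∃ b : ℝ≥0∞, b ≠ 0 ∧ ∀ a, (∑ i, if a = s i then b else 0) ≤ p a := by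
  obtain ⟨i₀, hi₀⟩ := Finite.exists_min fun i => p (s i)
  have hcard : (Fintype.card ι : ℝ≥0∞) ≠ 0 := by simp
  refine ⟨p (s i₀) / Fintype.card ι,
    ENNReal.div_ne_zero.2 ⟨(p.mem_support_iff _).1 (hs i₀), by simp⟩, fun a => ?_⟩
  by_cases ha : ∃ i, a = s i
  · obtain ⟨i, rfl⟩ := ha
    calc (∑ j, if s i = s j then p (s i₀) / Fintype.card ι else 0)
        ≤ ∑ _j : ι, p (s i₀) / Fintype.card ι := by gcongr; split_ifs <;> simp
      _ = p (s i₀) := by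
        rw [Finset.sum_const, Finset.card_univ, nsmul_eq_mul,
          ENNReal.mul_div_cancel hcard (by simp)]
      _ ≤ p (s i) := hi₀ i
  · push Not at ha
    simp [ha]

-- The element `inr i` has the same value as `inl (s i)`, but can be resampled uniformly in `i`.
theorem exists_pmf_sum_map_eq {ι : Type*} [Finite ι] [Nonempty ι] (p : PMF α)
    (s : ι → α) (hs : ∀ i, s i ∈ p.support) :
    ∃ (m : PMF (α ⊕ ι)) (b : ℝ≥0∞), b ≠ 0 ∧ (∀ i, m (Sum.inr i) = b) ∧
      m.map (Sum.elim id s) = p := by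
  classical
  have := Fintype.ofFinite ι
  obtain ⟨b, hb, hle⟩ := exists_sum_ite_le p s hs
  let c (a : α) : ℝ≥0∞ := ∑ i, if a = s i then b else 0
  let m : α ⊕ ι → ℝ≥0∞ := Sum.elim (fun a => p a - c a) fun _ => b
  have map_apply (a : α) : ∑' x, (if a = Sum.elim id s x then m x else 0) = p a := by
    rw [Summable.tsum_sum ENNReal.summable ENNReal.summable, tsum_fintype (L := .unconditional ι),
      tsum_eq_single a fun a' ha' => by simp [ha'.symm], Sum.elim_inl, id, if_pos rfl]
    exact tsub_add_cancel_of_le (hle a)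
  have mass : ∑' x, m x = 1 := by
    calc ∑' x, m x = ∑' x, ∑' a, if a = Sum.elim id s x then m x else 0 :=
          tsum_congr fun x => (tsum_ite_eq (Sum.elim id s x) fun _ => m x).symm
      _ = ∑' a, p a := by rw [ENNReal.tsum_comm]; exact tsum_congr map_apply
      _ = 1 := p.tsum_coe
  let M : PMF (α ⊕ ι) := ⟨m, mass ▸ ENNReal.summable.hasSum⟩
  exact ⟨M, b, hb, fun _ => rfl, PMF.ext fun a => (PMF.map_apply _ M a).trans (map_apply a)⟩

/-- The law of a list of `n` independent samples of `m`. -/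
noncomputable def iidLaw (m : PMF σ) : ℕ → PMF (List σ)
  | 0 => PMF.pure []
  | n + 1 => m.bind fun s => (iidLaw m n).map (List.cons s)

theorem lmean_iidLaw_succ (m : PMF σ) (n : ℕ) (F : List σ → ℝ≥0∞) :
    lmean (iidLaw m (n + 1)) F = lmean m fun s => lmean (iidLaw m n) fun l => F (s :: l) := by
  simp only [iidLaw, lmean_bind, lmean_map]

theorem iidLaw_map (m : PMF σ) (u : σ → τ) (n : ℕ) :
    iidLaw (m.map u) n = (iidLaw m n).map (List.map u) := by
  induction n with
  | zero => simp [iidLaw, PMF.pure_map]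
  | succ n ih =>
    simp only [iidLaw, ih, PMF.bind_map, PMF.map_bind, PMF.map_comp]
    rfl

end Probability

section RandomWalk

open scoped ENNReal

variable {M : Type*} [Monoid M]

/-- The law of the `n`-th position of the random walk with step law `p`, that is, the `n`-fold
convolution power of `p`. -/
noncomputable def walkLaw (p : PMF M) (n : ℕ) : PMF M :=
  (iidLaw p n).map List.prod

theorem walkLaw_zero (p : PMF M) : walkLaw p 0 = PMF.pure 1 := by
  simp [walkLaw, iidLaw, PMF.pure_map]

theorem walkLaw_succ (p : PMF M) (n : ℕ) :
    walkLaw p (n + 1) = p.bind fun g => (walkLaw p n).map (g * ·) := by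
  simp only [walkLaw, iidLaw, PMF.map_bind, PMF.map_comp]
  congr! 3

theorem walkLaw_one (p : PMF M) : walkLaw p 1 = p := by
  simp [walkLaw_succ, walkLaw_zero, PMF.pure_map]

theorem walkLaw_add (p : PMF M) (m n : ℕ) :
    walkLaw p (m + n) = (walkLaw p m).bind fun g => (walkLaw p n).map (g * ·) := by
  induction m with
  | zero => simp [walkLaw_zero, ← Function.id_def, PMF.map_id]
  | succ m ih =>
    rw [add_right_comm]
    simp only [walkLaw_succ, ih, PMF.map_bind, PMF.bind_bind, PMF.bind_map, PMF.map_comp,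
      Function.comp_def, mul_assoc]

theorem walkLaw_walkLaw (p : PMF M) (m n : ℕ) : walkLaw (walkLaw p m) n = walkLaw p (m * n) := by
  induction n with
  | zero => simp only [mul_zero, walkLaw_zero]
  | succ n ih => rw [walkLaw_succ, ih, mul_add_one, add_comm, walkLaw_add]

theorem lmean_walkLaw_zero (p : PMF M) (f : M → ℝ≥0∞) : lmean (walkLaw p 0) f = f 1 := by
  rw [walkLaw_zero, lmean_pure]

theorem lmean_walkLaw_add (p : PMF M) (m n : ℕ) (f : M → ℝ≥0∞) :
    lmean (walkLaw p (m + n)) f =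
      lmean (walkLaw p m) fun g => lmean (walkLaw p n) fun h => f (g * h) := by
  simp only [walkLaw_add, lmean_bind, lmean_map]

theorem mul_mem_support_walkLaw {p : PMF M} {m n : ℕ} {x y : M}
    (hx : x ∈ (walkLaw p m).support) (hy : y ∈ (walkLaw p n).support) :
    x * y ∈ (walkLaw p (m + n)).support := by
  rw [walkLaw_add, PMF.mem_support_bind_iff]
  exact ⟨x, hx, (PMF.mem_support_map_iff _ _ _).2 ⟨y, hy, rfl⟩⟩

theorem pow_mem_support_walkLaw {p : PMF M} {m : ℕ} {x : M} (hx : x ∈ (walkLaw p m).support)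
    (k : ℕ) : x ^ k ∈ (walkLaw p (k * m)).support := by
  induction k with
  | zero => simp [walkLaw_zero]
  | succ k ih =>
    rw [pow_succ, add_one_mul]
    exact mul_mem_support_walkLaw ih hx

theorem exists_mem_support_walkLaw {p : PMF M} {g : M}
    (hg : g ∈ Subsemigroup.closure p.support) : ∃ n, 0 < n ∧ g ∈ (walkLaw p n).support := by
  induction hg using Subsemigroup.closure_induction with
  | mem x hx => exact ⟨1, one_pos, by rwa [walkLaw_one]⟩
  | mul x y _ _ hx hy =>
    obtain ⟨m, hm, hxm⟩ := hx
    obtain ⟨n, -, hyn⟩ := hy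
    exact ⟨m + n, Nat.add_pos_left hm n, mul_mem_support_walkLaw hxm hyn⟩

-- Replaces the steps of the walk one at a time, starting with the last.
theorem lmean_walkLaw_le_of_step {q : PMF M} {F : ℕ → M → ℝ≥0∞} {e : ℝ≥0∞}
    (hstep : ∀ m a, lmean q (fun g => F m (a * g)) ≤ F (m + 1) a + e) (n m : ℕ) :
    lmean (walkLaw q n) (F m) ≤ F (m + n) 1 + n * e := by
  induction n generalizing m with
  | zero => simp [lmean_walkLaw_zero]
  | succ n ih =>
    calc lmean (walkLaw q (n + 1)) (F m)
        = lmean (walkLaw q n) fun a => lmean q fun g => F m (a * g) := by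
          rw [lmean_walkLaw_add, walkLaw_one]
      _ ≤ lmean (walkLaw q n) fun a => F (m + 1) a + e := lmean_mono _ (hstep m)
      _ = lmean (walkLaw q n) (F (m + 1)) + e := by rw [lmean_add, lmean_const]
      _ ≤ F (m + 1 + n) 1 + n * e + e := by gcongr; exact ih _
      _ = F (m + (n + 1)) 1 + (n + 1 : ℕ) * e := by
          rw [add_assoc m, add_comm 1 n]; push_cast; ring

theorem le_lmean_walkLaw_of_step {q : PMF M} {F : ℕ → M → ℝ≥0∞} {e : ℝ≥0∞}
    (hstep : ∀ m a, F (m + 1) a ≤ lmean q (fun g => F m (a * g)) + e) (n m : ℕ) :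
    F (m + n) 1 ≤ lmean (walkLaw q n) (F m) + n * e := by
  induction n generalizing m with
  | zero => simp [lmean_walkLaw_zero]
  | succ n ih =>
    calc F (m + (n + 1)) 1 = F (m + 1 + n) 1 := by rw [add_assoc m, add_comm 1 n]
      _ ≤ lmean (walkLaw q n) (F (m + 1)) + n * e := ih _
      _ ≤ lmean (walkLaw q n) (fun a => lmean q (fun g => F m (a * g)) + e) + n * e := by
          gcongr; exact lmean_mono _ (hstep m)
      _ = lmean (walkLaw q (n + 1)) (F m) + (n + 1 : ℕ) * e := by
          rw [lmean_add, lmean_const, lmean_walkLaw_add, walkLaw_one]; push_cast; ring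

end RandomWalk

section Excess

open scoped ENNReal

variable {G X : Type*} [Group G] [PseudoEMetricSpace X] [MulAction G X]

/-- The distance `d(o, g o)` by which `g` moves the basepoint. -/
noncomputable def displacement (o : X) (g : G) : ℝ≥0∞ :=
  edist o (g • o)

/-- The excess of the triangle inequality at `o`, which is twice the Gromov product
`(x | z)_o`. -/
noncomputable def excess (o x z : X) : ℝ≥0∞ :=
  edist x o + edist o z - edist x z

theorem excess_self_right (o x : X) : excess o x o = 0 := by
  simp [excess]

theorem add_edist_le_excess_add (o x z : X) :
    edist x o + edist o z ≤ excess o x z + edist x z :=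
  le_tsub_add

theorem excess_le_excess_add (o x z z' : X) :
    excess o x z' ≤ excess o x z + 2 * edist z z' := by
  refine tsub_le_iff_right.2 ?_
  calc edist x o + edist o z' ≤ edist x o + (edist o z + edist z z') := by
        gcongr; exact edist_triangle _ _ _
    _ = edist x o + edist o z + edist z z' := (add_assoc _ _ _).symm
    _ ≤ excess o x z + edist x z + edist z z' := by
        gcongr ?_ + _; exact add_edist_le_excess_add o x z
    _ ≤ excess o x z + (edist x z' + edist z z') + edist z z' := by
        gcongr; exact edist_comm z z' ▸ edist_triangle _ _ _
    _ = excess o x z + 2 * edist z z' + edist x z' := by ring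

theorem lmean_walkLaw_succ_displacement_mul (o : X) (p : PMF G) (m : ℕ) (a : G) :
    lmean (walkLaw p (m + 1)) (fun b => displacement o (a * b)) =
      lmean p fun g => lmean (walkLaw p m) fun b => displacement o (a * g * b) := by
  simp only [add_comm m, lmean_walkLaw_add, walkLaw_one, mul_assoc]

variable [IsIsometricSMul G X]

theorem displacement_inv (o : X) (g : G) : displacement o g⁻¹ = displacement o g := by
  rw [displacement, ← edist_smul_left g, smul_inv_smul, edist_comm, displacement]

theorem displacement_mul_le (o : X) (g h : G) :
    displacement o (g * h) ≤ displacement o g + displacement o h := by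
  simpa only [displacement, mul_smul, edist_smul_left] using edist_triangle o (g • o) (g • h • o)

theorem edist_inv_smul_left (g : G) (x y : X) : edist (g⁻¹ • x) y = edist x (g • y) := by
  rw [← edist_smul_left g, smul_inv_smul]

theorem excess_smul_le (o x z : X) (g : G) :
    excess o x (g • z) ≤ 2 * displacement o g + excess o (g⁻¹ • x) z := by
  have move : edist x o ≤ edist x (g • o) + edist o (g • o) := by
    rw [edist_comm o]
    exact edist_triangle _ _ _
  refine tsub_le_iff_right.2 ?_
  calc edist x o + edist o (g • z)
      ≤ (edist x (g • o) + edist o (g • o)) + (edist o (g • o) + edist (g • o) (g • z)) := by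
        gcongr
        exact edist_triangle _ _ _
    _ = 2 * displacement o g + (edist (g⁻¹ • x) o + edist o z) := by
        rw [edist_inv_smul_left, edist_smul_left, displacement]; ring
    _ ≤ 2 * displacement o g + (excess o (g⁻¹ • x) z + edist (g⁻¹ • x) z) := by
        gcongr _ + ?_; exact add_edist_le_excess_add o (g⁻¹ • x) z
    _ = 2 * displacement o g + excess o (g⁻¹ • x) z + edist x (g • z) := by
        rw [edist_inv_smul_left, add_assoc]

theorem excess_mul_smul_le (o x : X) (g h : G) :
    excess o x ((g * h) • o) ≤ excess o x (g • o) + 2 * displacement o h := by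
  simpa only [displacement, mul_smul, edist_smul_left] using
    excess_le_excess_add o x (g • o) ((g * h) • o)

theorem displacement_mul_le_insert (o : X) (a g b : G) :
    displacement o (a * b) ≤
      displacement o (a * g * b) + (displacement o g + excess o ((a * g)⁻¹ • o) (b • o)) := by
  have remove : displacement o a ≤ displacement o (a * g) + displacement o g := by
    simpa [displacement_inv] using displacement_mul_le o (a * g) g⁻¹
  have add_le : displacement o (a * g) + displacement o b ≤
      excess o ((a * g)⁻¹ • o) (b • o) + displacement o (a * g * b) := by
    simpa only [displacement, edist_inv_smul_left, mul_smul] using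
      add_edist_le_excess_add o ((a * g)⁻¹ • o) (b • o)
  calc displacement o (a * b) ≤ displacement o a + displacement o b := displacement_mul_le o a b
    _ ≤ displacement o (a * g) + displacement o g + displacement o b := by gcongr
    _ = displacement o (a * g) + displacement o b + displacement o g := by ring
    _ ≤ excess o ((a * g)⁻¹ • o) (b • o) + displacement o (a * g * b) + displacement o g := by
        gcongr
    _ = _ := by ring

theorem lmean_walkLaw_displacement_ne_top {o : X} {p : PMF G}
    (hp : lmean p (displacement o) ≠ ∞) (n : ℕ) : lmean (walkLaw p n) (displacement o) ≠ ∞ := by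
  induction n with
  | zero => simp [lmean_walkLaw_zero, displacement]
  | succ n ih =>
    refine ne_top_of_le_ne_top (ENNReal.add_ne_top.2 ⟨ih, hp⟩) ?_
    calc lmean (walkLaw p (n + 1)) (displacement o)
        = lmean (walkLaw p n) fun g => lmean p fun h => displacement o (g * h) := by
          rw [lmean_walkLaw_add, walkLaw_one]
      _ ≤ lmean (walkLaw p n) fun g => lmean p fun h => displacement o g + displacement o h :=
          lmean_mono _ fun g => lmean_mono _ fun h => displacement_mul_le o g h
      _ = lmean (walkLaw p n) (displacement o) + lmean p (displacement o) := by
          simp only [lmean_add, lmean_const]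

end Excess

section Potentials

open scoped ENNReal

variable {G X σ : Type*} [Group G] [MulAction G X]

/-- The cost `c` of the steps of a list, where a step is discounted by the product of the weights
of the steps before it. The weight of a step depends on the inverse image of `x` under the
preceding steps. -/
noncomputable def forwardPotential (val : σ → G) (c : σ → ℝ≥0∞) (w : X → σ → ℝ≥0∞) :
    List σ → X → ℝ≥0∞
  | [], _ => 0
  | s :: l, x => c s + w x s * forwardPotential val c w l ((val s)⁻¹ • x)

/-- The cost `c` of the steps of a list, where the cost accumulated by the steps after a given one
is multiplied by a weight depending on the point to which these steps move `o`. -/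
noncomputable def backwardPotential (o : X) (val : σ → G) (c : σ → ℝ≥0∞) (w : X → σ → ℝ≥0∞) :
    List σ → ℝ≥0∞
  | [] => 0
  | s :: l => c s + w ((l.map val).prod • o) s * backwardPotential o val c w l

variable {m : PMF σ} {val : σ → G} {c : σ → ℝ≥0∞} {w : X → σ → ℝ≥0∞} {ρ Q : ℝ≥0∞}

theorem lmean_iidLaw_forwardPotential_le (hw : ∀ x, lmean m (w x) ≤ ρ)
    (hQ : lmean m c + ρ * Q ≤ Q) (n : ℕ) (x : X) :
    lmean (iidLaw m n) (fun l => forwardPotential val c w l x) ≤ Q := by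
  induction n generalizing x with
  | zero => simp [iidLaw, lmean_pure, forwardPotential]
  | succ n ih =>
    calc lmean (iidLaw m (n + 1)) (fun l => forwardPotential val c w l x)
        = lmean m fun s => c s + w x s *
            lmean (iidLaw m n) fun l => forwardPotential val c w l ((val s)⁻¹ • x) := by
          simp only [lmean_iidLaw_succ, forwardPotential, lmean_add, lmean_const, lmean_const_mul]
      _ ≤ lmean m fun s => c s + Q * w x s :=
          lmean_mono m fun s => by rw [mul_comm Q]; gcongr; exact ih _
      _ = lmean m c + lmean m (w x) * Q := by rw [lmean_add, lmean_const_mul, mul_comm Q]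
      _ ≤ lmean m c + ρ * Q := by gcongr; exact hw x
      _ ≤ Q := hQ

theorem lmean_iidLaw_backwardPotential_le {o : X} (hw : ∀ x, lmean m (w x) ≤ ρ)
    (hQ : lmean m c + ρ * Q ≤ Q) (n : ℕ) :
    lmean (iidLaw m n) (backwardPotential o val c w) ≤ Q := by
  induction n with
  | zero => simp [iidLaw, lmean_pure, backwardPotential]
  | succ n ih =>
    calc lmean (iidLaw m (n + 1)) (backwardPotential o val c w)
        = lmean (iidLaw m n) fun l => lmean m c +
            backwardPotential o val c w l * lmean m (w ((l.map val).prod • o)) := by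
          simp only [lmean_iidLaw_succ, backwardPotential]
          rw [lmean_comm]
          simp only [lmean_add, mul_comm (w _ _), lmean_const_mul]
      _ ≤ lmean (iidLaw m n) fun l => lmean m c + ρ * backwardPotential o val c w l :=
          lmean_mono _ fun l => by rw [mul_comm ρ]; gcongr; exact hw _
      _ = lmean m c + ρ * lmean (iidLaw m n) (backwardPotential o val c w) := by
          rw [lmean_add, lmean_const, lmean_const_mul]
      _ ≤ lmean m c + ρ * Q := by gcongr
      _ ≤ Q := hQ

end Potentials

section Deviation

open scoped ENNReal

theorem one_le_add_of_one_le_mul {R : Type*} [Semiring R] [LinearOrder R]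
    [CanonicallyOrderedAdd R] {a b : R} (h : 1 ≤ a * b) : 1 ≤ a + b := by
  rcases le_total 1 a with ha | ha
  · exact ha.trans le_self_add
  · calc 1 ≤ a * b := h
      _ ≤ 1 * b := by gcongr
      _ ≤ a + b := by rw [one_mul]; exact le_add_self

variable {G X σ : Type*} [Group G] [PseudoEMetricSpace X] [MulAction G X] [IsIsometricSMul G X]

-- Both potentials are carried along the list with prefactors `a` and `b`. As long as no step has
-- small excess, `a * b` stays at least `1`, hence `a + b` does, and the step is paid for.
theorem excess_list_prod_smul_le {o : X} {val : σ → G} {wA wB : X → σ → ℝ≥0∞} {C : ℝ≥0∞}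
    (hgood : ∀ x s y, 1 ≤ wA x s * wB y s ∨ excess o x (val s • y) ≤ C) (l : List σ) (x : X)
    {a b : ℝ≥0∞} (hab : 1 ≤ a * b) :
    excess o x ((l.map val).prod • o) ≤
      C + (a * forwardPotential val (fun s => 2 * displacement o (val s)) wA l x +
        b * backwardPotential o val (fun s => 2 * displacement o (val s)) wB l) := by
  induction l generalizing x a b with
  | nil => simp [excess_self_right]
  | cons s l ih =>
    simp only [List.map_cons, List.prod_cons, forwardPotential, backwardPotential, mul_smul]
    set y := (l.map val).prod • o
    rcases hgood x s y with hw | hC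
    · have hab' : 1 ≤ a * wA x s * (b * wB y s) :=
        mul_mul_mul_comm a b _ _ ▸ one_le_mul hab hw
      have pay : 2 * displacement o (val s) ≤ (a + b) * (2 * displacement o (val s)) :=
        le_mul_of_one_le_left' (one_le_add_of_one_le_mul hab)
      exact (excess_smul_le o x y (val s)).trans <|
        (add_le_add pay (ih ((val s)⁻¹ • x) hab')).trans_eq (by ring)
    · exact hC.trans le_self_add

/-- The random walk with step law `p` satisfies a deviation inequality: the mean excess at `o`
between any point and the position of the walk is at most `C`, at all times. -/
def HasDeviationBound (o : X) (p : PMF G) (C : ℝ≥0∞) : Prop :=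
  ∀ n x, lmean (walkLaw p n) (fun g => excess o x (g • o)) ≤ C

theorem hasDeviationBound_map {o : X} {m : PMF σ} {val : σ → G} {wA wB : X → σ → ℝ≥0∞}
    {C ρ Q : ℝ≥0∞} (hgood : ∀ x s y, 1 ≤ wA x s * wB y s ∨ excess o x (val s • y) ≤ C)
    (hA : ∀ x, lmean m (wA x) ≤ ρ) (hB : ∀ y, lmean m (wB y) ≤ ρ)
    (hQ : 2 * lmean (m.map val) (displacement o) + ρ * Q ≤ Q) :
    HasDeviationBound o (m.map val) (C + (Q + Q)) := by
  intro n x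
  rw [lmean_map, ← lmean_const_mul] at hQ
  rw [walkLaw, iidLaw_map, PMF.map_comp, lmean_map]
  refine (lmean_mono _ fun l => excess_list_prod_smul_le hgood l x (a := 1) (b := 1) ?_).trans ?_
  · simp
  · simp only [lmean_add, lmean_const, one_mul]
    gcongr
    · exact lmean_iidLaw_forwardPotential_le hA hQ n x
    · exact lmean_iidLaw_backwardPotential_le hB hQ n

namespace HasDeviationBound

theorem of_walkLaw {o : X} {p : PMF G} {N : ℕ} (hN : 0 < N) {C : ℝ≥0∞}
    (h : HasDeviationBound o (walkLaw p N) C) :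
    HasDeviationBound o p
      (C + ∑ r ∈ Finset.range N, 2 * lmean (walkLaw p r) (displacement o)) := by
  intro n x
  rw [← Nat.div_add_mod n N, lmean_walkLaw_add]
  set r := n % N
  calc lmean (walkLaw p (N * (n / N))) (fun g =>
        lmean (walkLaw p r) fun g' => excess o x ((g * g') • o))
      ≤ lmean (walkLaw p (N * (n / N))) fun g =>
          lmean (walkLaw p r) fun g' => excess o x (g • o) + 2 * displacement o g' :=
        lmean_mono _ fun g => lmean_mono _ fun g' => excess_mul_smul_le o x g g'
    _ = lmean (walkLaw p (N * (n / N))) (fun g => excess o x (g • o)) +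
          2 * lmean (walkLaw p r) (displacement o) := by
        simp only [lmean_add, lmean_const, lmean_const_mul]
    _ ≤ C + ∑ r ∈ Finset.range N, 2 * lmean (walkLaw p r) (displacement o) := by
        gcongr
        · exact walkLaw_walkLaw p N (n / N) ▸ h (n / N) x
        · exact Finset.single_le_sum (f := fun r => 2 * lmean (walkLaw p r) (displacement o))
            (fun _ _ => zero_le) (Finset.mem_range.2 (Nat.mod_lt _ hN))

variable {o : X} {p q : PMF G} {C : ℝ≥0∞}

theorem lmean_displacement_mul_le (h : HasDeviationBound o p C) (m : ℕ) (a g : G) :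
    lmean (walkLaw p m) (fun b => displacement o (a * b)) ≤
      lmean (walkLaw p m) (fun b => displacement o (a * g * b)) + (displacement o g + C) := by
  refine (lmean_mono _ fun b => displacement_mul_le_insert o a g b).trans ?_
  rw [lmean_add, lmean_add, lmean_const]
  gcongr
  exact h m _

theorem lmean_displacement_mul_mul_le (h : HasDeviationBound o p C) (m : ℕ) (a g : G) :
    lmean (walkLaw p m) (fun b => displacement o (a * g * b)) ≤
      lmean (walkLaw p m) (fun b => displacement o (a * b)) + (displacement o g + C) := by
  simpa only [mul_inv_cancel_right, displacement_inv] using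
    h.lmean_displacement_mul_le m (a * g) g⁻¹

theorem lmean_displacement_le_add (h : HasDeviationBound o p C) (q : PMF G) (n : ℕ) :
    lmean (walkLaw q n) (displacement o) ≤ lmean (walkLaw p n) (displacement o) +
      n * weightedDist (fun g => displacement o g + C) q p := by
  have step (m : ℕ) (a : G) := lmean_walkLaw_succ_displacement_mul o p m a ▸
    lmean_le_lmean_add_weightedDist q p (h.lmean_displacement_mul_mul_le m a)
      (h.lmean_displacement_mul_le m a)
  simpa [lmean_walkLaw_zero] using lmean_walkLaw_le_of_step
    (F := fun m a => lmean (walkLaw p m) fun b => displacement o (a * b)) step n 0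

theorem le_lmean_displacement_add (h : HasDeviationBound o p C) (q : PMF G) (n : ℕ) :
    lmean (walkLaw p n) (displacement o) ≤ lmean (walkLaw q n) (displacement o) +
      n * weightedDist (fun g => displacement o g + C) q p := by
  have step (m : ℕ) (a : G) := weightedDist_comm _ p q ▸
    lmean_walkLaw_succ_displacement_mul o p m a ▸ lmean_le_lmean_add_weightedDist p q
      (h.lmean_displacement_mul_mul_le m a) (h.lmean_displacement_mul_le m a)
  simpa [lmean_walkLaw_zero] using le_lmean_walkLaw_of_step
    (F := fun m a => lmean (walkLaw p m) fun b => displacement o (a * b)) step n 0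

end HasDeviationBound

end Deviation

section Schottky

open scoped ENNReal

theorem exists_add_mul_le {a ρ : ℝ≥0∞} (ha : a ≠ ∞) (hρ : ρ < 1) : ∃ Q ≠ ∞, a + ρ * Q ≤ Q := by
  have hpos : 1 - ρ ≠ 0 := (tsub_pos_of_lt hρ).ne'
  have hfin : 1 - ρ ≠ ∞ := ENNReal.sub_ne_top ENNReal.one_ne_top
  refine ⟨a / (1 - ρ), ENNReal.div_ne_top ha hpos, le_of_eq ?_⟩
  calc a + ρ * (a / (1 - ρ)) = (1 - ρ) * (a / (1 - ρ)) + ρ * (a / (1 - ρ)) := by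
        rw [ENNReal.mul_div_cancel hpos hfin]
    _ = a / (1 - ρ) := by rw [← add_mul, tsub_add_cancel_of_le hρ.le, one_mul]

section TagWeight

variable {α ι : Type*}

open scoped Classical in
/-- The factor by which a step in `α ⊕ ι` changes a potential: steps in `α` are neutral, a step
`i : ι` divides the potential by `4` if it is aligned (`P i`) and multiplies it by `4` otherwise. -/
noncomputable def tagWeight (P : ι → Prop) : α ⊕ ι → ℝ≥0∞ :=
  Sum.elim (fun _ => 1) fun i => if P i then 4⁻¹ else 4

theorem one_le_tagWeight_mul_tagWeight_inl (P R : ι → Prop) (a : α) :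
    1 ≤ tagWeight P (Sum.inl a) * tagWeight R (Sum.inl a) := by
  simp [tagWeight]

theorem one_le_tagWeight_mul_tagWeight_inr {P R : ι → Prop} {i : ι} (h : ¬ (P i ∧ R i)) :
    1 ≤ tagWeight P (Sum.inr i : α ⊕ ι) * tagWeight R (Sum.inr i : α ⊕ ι) := by
  have inv_mul : (4⁻¹ : ℝ≥0∞) * 4 = 1 := ENNReal.inv_mul_cancel (by simp) (by simp)
  have mul_inv : (4 : ℝ≥0∞) * 4⁻¹ = 1 := ENNReal.mul_inv_cancel (by simp) (by simp)
  rcases not_and_or.1 h with hP | hR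
  · by_cases hR : R i
    · simp [tagWeight, hP, hR, mul_inv]
    · simp only [tagWeight, hP, hR, Sum.elim_inr, if_false]
      norm_num
  · by_cases hP : P i
    · simp [tagWeight, hP, hR, inv_mul]
    · simp only [tagWeight, hP, hR, Sum.elim_inr, if_false]
      norm_num

theorem sum_tagWeight_inr_le [Fintype ι] {P : ι → Prop} (hP : {i | ¬ P i}.Subsingleton) :
    ∑ i, tagWeight P (Sum.inr i : α ⊕ ι) ≤ Fintype.card ι * 4⁻¹ + 4 := by
  classical
  calc ∑ i, tagWeight P (Sum.inr i : α ⊕ ι) ≤ ∑ i, (4⁻¹ + if P i then 0 else 4) := by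
        gcongr with i
        by_cases h : P i <;> simp [tagWeight, h]
    _ = Fintype.card ι * 4⁻¹ + ∑ i, if P i then 0 else 4 := by
        simp [Finset.sum_add_distrib]
    _ ≤ Fintype.card ι * 4⁻¹ + 4 := by
        gcongr
        have hcard : (Finset.univ.filter fun i => ¬ P i).card ≤ 1 :=
          Finset.card_le_one.2 fun i hi j hj => hP (by simpa using hi) (by simpa using hj)
        simp only [← ite_not (P _), ← Finset.sum_filter, Finset.sum_const, nsmul_eq_mul]
        exact mul_le_of_le_one_left' (by exact_mod_cast hcard)

theorem lmean_sum [Fintype ι] (m : PMF (α ⊕ ι)) (f : α ⊕ ι → ℝ≥0∞) :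
    lmean m f = ∑' a, m (Sum.inl a) * f (Sum.inl a) + ∑ i, m (Sum.inr i) * f (Sum.inr i) := by
  rw [lmean, Summable.tsum_sum ENNReal.summable ENNReal.summable,
    tsum_fintype (L := .unconditional ι)]

theorem lmean_tagWeight_add_le {m : PMF (α ⊕ Fin 16)} {b : ℝ≥0∞} (hm : ∀ i, m (Sum.inr i) = b)
    {P : Fin 16 → Prop} (hP : {i | ¬ P i}.Subsingleton) :
    lmean m (tagWeight P) + 8 * b ≤ 1 := by
  have hsum : ∑ i, tagWeight P (Sum.inr i : α ⊕ Fin 16) ≤ 8 := by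
    refine (sum_tagWeight_inr_le hP).trans_eq ?_
    rw [Fintype.card_fin, show ((16 : ℕ) : ℝ≥0∞) = 4 * 4 by norm_num, mul_assoc,
      ENNReal.mul_inv_cancel (by simp) (by simp)]
    norm_num
  calc lmean m (tagWeight P) + 8 * b
      = ∑' a, m (Sum.inl a) + b * ∑ i, tagWeight P (Sum.inr i : α ⊕ Fin 16) + 8 * b := by
        simp [lmean_sum, hm, Finset.mul_sum, tagWeight]
    _ ≤ ∑' a, m (Sum.inl a) + b * 8 + 8 * b := by gcongr
    _ = ∑' a, m (Sum.inl a) + 16 * b := by ring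
    _ = lmean m fun _ => 1 := by simp [lmean_sum, hm]
    _ = 1 := lmean_const m 1

end TagWeight

variable {G X ι : Type*} [Group G] [PseudoEMetricSpace X] [MulAction G X]

/-- A Schottky family with constant `C`: for all points `x` and `y`, the path from `x` to
`s i • y` passes through `o` up to `C`, unless `i` is one of at most two bad indices, of which one
depends only on `x` and the other only on `y`. -/
def IsSchottky (o : X) (C : ℝ≥0∞) (s : ι → G) : Prop :=
  ∃ A B : X → ι → Prop, (∀ x, {i | ¬ A x i}.Subsingleton) ∧ (∀ y, {i | ¬ B y i}.Subsingleton) ∧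
    ∀ x i y, A x i → B y i → excess o x (s i • y) ≤ C

theorem IsSchottky.exists_hasDeviationBound [IsIsometricSMul G X] {o : X} {C : ℝ≥0∞}
    {s : Fin 16 → G} (hs : IsSchottky o C s) (hC : C ≠ ∞) {p : PMF G}
    (hsp : ∀ i, s i ∈ p.support) (hp : lmean p (displacement o) ≠ ∞) :
    ∃ C' ≠ ∞, HasDeviationBound o p C' := by
  obtain ⟨A, B, hA, hB, hAB⟩ := hs
  obtain ⟨m, b, hb, hmb, rfl⟩ := exists_pmf_sum_map_eq p s hsp
  have contraction (P : Fin 16 → Prop) (hP : {i | ¬ P i}.Subsingleton) :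
      lmean m (tagWeight P) ≤ 1 - 8 * b := by
    have hb_ne_top : 8 * b ≠ ∞ := ENNReal.mul_ne_top (by simp) (hmb 0 ▸ m.apply_ne_top _)
    exact ENNReal.le_sub_of_add_le_right hb_ne_top (lmean_tagWeight_add_le hmb hP)
  have lt_one : 1 - 8 * b < 1 := by
    refine ENNReal.sub_lt_self ENNReal.one_ne_top one_ne_zero (mul_ne_zero (by simp) hb)
  obtain ⟨Q, hQ_ne_top, hQ⟩ := exists_add_mul_le (ENNReal.mul_ne_top (a := 2) (by simp) hp) lt_one
  refine ⟨C + (Q + Q), by simp [hC, hQ_ne_top], hasDeviationBound_map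
    (wA := fun x => tagWeight (A x)) (wB := fun y => tagWeight (B y)) ?_
    (fun x => contraction _ (hA x)) (fun y => contraction _ (hB y)) hQ⟩
  rintro x (g | i) y
  · exact .inl (one_le_tagWeight_mul_tagWeight_inl _ _ g)
  · by_cases h : A x i ∧ B y i
    · exact .inr (hAB x i y h.1 h.2)
    · exact .inl (one_le_tagWeight_mul_tagWeight_inr h)

end Schottky

section Geodesic

variable {X : Type*} [MetricSpace X] {f : ℝ → X} {x y : X}

namespace IsGeodesicSegment

theorem reverse (hf : IsGeodesicSegment f x y) :
    IsGeodesicSegment (fun t => f (dist x y - t)) y x := by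
  refine ⟨by simpa using hf.2.1, by simpa [dist_comm y x] using hf.1, fun s hs t ht => ?_⟩
  rw [dist_comm y x] at hs ht
  rw [hf.2.2 _ ⟨by linarith [hs.2], by linarith [hs.1]⟩ _ ⟨by linarith [ht.2], by linarith [ht.1]⟩,
    sub_sub_sub_cancel_left, abs_sub_comm]

theorem dist_left (hf : IsGeodesicSegment f x y) {t : ℝ} (ht : t ∈ Set.Icc 0 (dist x y)) :
    dist x (f t) = t := by
  rw [← hf.1, hf.2.2 0 ⟨le_rfl, dist_nonneg⟩ t ht, zero_sub, abs_neg, abs_of_nonneg ht.1]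

theorem dist_right (hf : IsGeodesicSegment f x y) {t : ℝ} (ht : t ∈ Set.Icc 0 (dist x y)) :
    dist (f t) y = dist x y - t := by
  conv_lhs => rw [← hf.2.1]
  rw [hf.2.2 t ht _ ⟨dist_nonneg, le_rfl⟩, abs_sub_comm, abs_of_nonneg (sub_nonneg.2 ht.2)]

theorem initial (hf : IsGeodesicSegment f x y) {t : ℝ} (ht : t ∈ Set.Icc 0 (dist x y)) :
    IsGeodesicSegment f x (f t) := by
  rw [IsGeodesicSegment, hf.dist_left ht]
  exact ⟨hf.1, rfl, fun s hs u hu =>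
    hf.2.2 s ⟨hs.1, hs.2.trans ht.2⟩ u ⟨hu.1, hu.2.trans ht.2⟩⟩

theorem continuousOn (hf : IsGeodesicSegment f x y) :
    ContinuousOn f (Set.Icc 0 (dist x y)) :=
  (LipschitzOnWith.of_dist_le_mul (K := 1) fun s hs t ht => by
    rw [hf.2.2 s hs t ht, Real.dist_eq, NNReal.coe_one, one_mul]).continuousOn

theorem smul {G : Type*} [Group G] [MulAction G X] [IsIsometricSMul G X]
    (hf : IsGeodesicSegment f x y) (g : G) :
    IsGeodesicSegment (fun t => g • f t) (g • x) (g • y) := by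
  simpa only [IsGeodesicSegment, dist_smul, smul_left_cancel_iff] using hf

end IsGeodesicSegment

theorem exists_first_le {φ : ℝ → ℝ} {a b c : ℝ} (hab : a ≤ b)
    (hφ : ContinuousOn φ (Set.Icc a b)) (hb : φ b ≤ c) :
    ∃ t ∈ Set.Icc a b, φ t ≤ c ∧ (t = a ∨ ∀ s ∈ Set.Icc a t, c ≤ φ s) := by
  have hclosed : IsClosed (Set.Icc a b ∩ φ ⁻¹' Set.Iic c) :=
    hφ.preimage_isClosed_of_isClosed isClosed_Icc isClosed_Iic
  obtain ⟨t, ⟨ht, htc⟩, hmin⟩ := (isCompact_Icc.of_isClosed_subset hclosed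
    Set.inter_subset_left).exists_isLeast ⟨b, Set.right_mem_Icc.2 hab, hb⟩
  refine ⟨t, ht, htc, or_iff_not_imp_right.2 fun hlt => ?_⟩
  push Not at hlt
  obtain ⟨s, hs, hsc⟩ := hlt
  have hst : s = t := hs.2.antisymm (hmin ⟨⟨hs.1, hs.2.trans ht.2⟩, hsc.le⟩)
  subst hst
  by_contra hsa
  have hac : c < φ a := by
    by_contra! hac
    exact hsa ((hmin ⟨Set.left_mem_Icc.2 hab, hac⟩).antisymm hs.1)
  obtain ⟨r, hr, hrc⟩ := intermediate_value_Icc' ht.1 (hφ.mono (Set.Icc_subset_Icc_right ht.2))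
    ⟨hsc.le, hac.le⟩
  have hrs : r = s := hr.2.antisymm (hmin ⟨⟨hr.1, hr.2.trans ht.2⟩, hrc.le⟩)
  exact hsc.ne (hrs ▸ hrc)

end Geodesic

section ContractingSet

variable {X : Type*} [MetricSpace X]

/-- A `K`-contracting set: nearest-point projections to `A` exist, and the projection to `A` moves
by less than `K` along a geodesic at distance at least `K` from `A`. -/
structure IsContractingSet (K : ℝ) (A : Set X) : Prop where
  pos : 0 < K
  projSet_nonempty (x : X) : (projSet A x).Nonempty
  dist_lt {f : ℝ → X} {x y : X} (hf : IsGeodesicSegment f x y)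
    (hfar : ∀ t ∈ Set.Icc 0 (dist x y), K ≤ Metric.infDist (f t) A) {p q : X}
    (hp : p ∈ projSet A x) (hq : q ∈ projSet A y) : dist p q < K

namespace IsContractingSet

variable {K : ℝ} {A : Set X} {x y p q : X}

theorem mono {K' : ℝ} (hA : IsContractingSet K A) (hK : K ≤ K') : IsContractingSet K' A where
  pos := hA.pos.trans_le hK
  projSet_nonempty := hA.projSet_nonempty
  dist_lt hf hfar _ _ hp hq := (hA.dist_lt hf (fun t ht => hK.trans (hfar t ht)) hp hq).trans_le hK

theorem exists_dist_le_of_infDist_le (hA : IsContractingSet K A) {f : ℝ → X}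
    (hf : IsGeodesicSegment f x y) (hp : p ∈ projSet A x) {t₀ : ℝ}
    (ht₀ : t₀ ∈ Set.Icc 0 (dist x y)) (hnear : Metric.infDist (f t₀) A ≤ K) :
    ∃ t ∈ Set.Icc 0 t₀, dist (f t) p ≤ 2 * K := by
  have hcont : ContinuousOn (fun t => Metric.infDist (f t) A) (Set.Icc 0 t₀) :=
    (Metric.continuous_infDist_pt A).comp_continuousOn
      (hf.continuousOn.mono (Set.Icc_subset_Icc_right ht₀.2))
  obtain ⟨t, ht, hle, rfl | hfar⟩ := exists_first_le ht₀.1 hcont hnear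
  · refine ⟨0, ht, ?_⟩
    rw [hf.1] at hle ⊢
    linarith [hp.2, hA.pos]
  · have ht' : t ∈ Set.Icc 0 (dist x y) := ⟨ht.1, ht.2.trans ht₀.2⟩
    obtain ⟨r, hr⟩ := hA.projSet_nonempty (f t)
    have hpr : dist p r < K := hA.dist_lt (hf.initial ht') (by rwa [hf.dist_left ht']) hp hr
    exact ⟨t, ht, by linarith [dist_triangle_right (f t) p r, hr.2]⟩

theorem exists_dist_le_dist_le (hA : IsContractingSet K A) {f : ℝ → X}
    (hf : IsGeodesicSegment f x y) (hp : p ∈ projSet A x) (hq : q ∈ projSet A y)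
    (hpq : K ≤ dist p q) :
    ∃ t₁ ∈ Set.Icc 0 (dist x y), ∃ t₂ ∈ Set.Icc 0 (dist x y),
      t₁ ≤ t₂ ∧ dist (f t₁) p ≤ 2 * K ∧ dist (f t₂) q ≤ 2 * K := by
  obtain ⟨t₀, ht₀, hnear⟩ : ∃ t₀ ∈ Set.Icc 0 (dist x y), Metric.infDist (f t₀) A ≤ K := by
    by_contra! hfar
    exact hpq.not_gt (hA.dist_lt hf (fun t ht => (hfar t ht).le) hp hq)
  obtain ⟨t₁, ht₁, hd₁⟩ := hA.exists_dist_le_of_infDist_le hf hp ht₀ hnear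
  obtain ⟨t₂, ht₂, hd₂⟩ := hA.exists_dist_le_of_infDist_le hf.reverse hq (t₀ := dist x y - t₀)
    (by rw [dist_comm y x]; exact ⟨by linarith [ht₀.2], by linarith [ht₀.1]⟩)
    (by rwa [sub_sub_cancel])
  exact ⟨t₁, ⟨ht₁.1, ht₁.2.trans ht₀.2⟩, dist x y - t₂,
    ⟨by linarith [ht₂.2, ht₀.1], by linarith [ht₂.1]⟩, by linarith [ht₁.2, ht₂.2], hd₁, hd₂⟩

theorem dist_add_dist_le (hA : IsContractingSet K A) (hgeo : IsGeodesicSpace X)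
    (hp : p ∈ projSet A x) (hq : q ∈ projSet A y) (hpq : K ≤ dist p q) :
    dist x p + dist y q ≤ dist x y + 4 * K := by
  obtain ⟨f, hf⟩ := hgeo x y
  obtain ⟨t₁, ht₁, t₂, ht₂, h12, hd₁, hd₂⟩ := hA.exists_dist_le_dist_le hf hp hq hpq
  have hx := dist_triangle x (f t₁) p
  have hy := dist_triangle_left y q (f t₂)
  rw [hf.dist_left ht₁] at hx
  rw [hf.dist_right ht₂] at hy
  linarith

theorem dist_projSet_le (hA : IsContractingSet K A) (hgeo : IsGeodesicSpace X)
    (hp : p ∈ projSet A x) (hq : q ∈ projSet A y) : dist p q ≤ dist x y + 4 * K := by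
  rcases lt_or_ge (dist p q) K with hpq | hpq
  · linarith [hA.pos, dist_nonneg (x := x) (y := y)]
  obtain ⟨f, hf⟩ := hgeo x y
  obtain ⟨t₁, ht₁, t₂, ht₂, h12, hd₁, hd₂⟩ := hA.exists_dist_le_dist_le hf hp hq hpq
  have hmid := hf.2.2 t₁ ht₁ t₂ ht₂
  rw [abs_of_nonpos (sub_nonpos.2 h12)] at hmid
  linarith [dist_triangle4 p (f t₁) (f t₂) q, dist_comm p (f t₁), ht₁.1, ht₂.2]

theorem mem_projSet_of_dist_eq_add {z : X} (hp : p ∈ projSet A x)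
    (hz : dist x p = dist x z + dist z p) : p ∈ projSet A z := by
  refine ⟨hp.1, le_antisymm ?_ (Metric.infDist_le_dist_of_mem hp.1)⟩
  linarith [Metric.infDist_le_infDist_add_dist (s := A) (x := x) (y := z), hp.2]

-- The Behrstock inequality. The geodesic from `x` to its projection `p` to `B` passes close to the
-- projection `q` of `x` to `A`, and all its points project to `p`.
theorem dist_projSet_projSet_le (hA : IsContractingSet K A) {B : Set X}
    (hB : IsContractingSet K B) (hgeo : IsGeodesicSpace X) (hp : p ∈ projSet B x)
    (hq : q ∈ projSet A x) {r s : X} (hr : r ∈ projSet A p) (hqr : K ≤ dist q r)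
    (hs : s ∈ projSet B q) : dist p s ≤ 6 * K := by
  obtain ⟨f, hf⟩ := hgeo x p
  obtain ⟨t, ht, -, -, -, hd, -⟩ := hA.exists_dist_le_dist_le hf hq hr hqr
  have hpt : p ∈ projSet B (f t) := mem_projSet_of_dist_eq_add hp <| by
    rw [hf.dist_left ht, hf.dist_right ht, add_sub_cancel]
  linarith [hB.dist_projSet_le hgeo hpt hs]

end IsContractingSet

variable {G : Type*} [Group G] [MulAction G X] [IsIsometricSMul G X] {A : Set X} {x p : X}

theorem smul_mem_projSet_smul (g : G) (hp : p ∈ projSet A x) :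
    g • p ∈ projSet (g • A) (g • x) := by
  refine ⟨Set.smul_mem_smul_set hp.1, ?_⟩
  rw [dist_smul, hp.2]
  exact (Metric.infDist_image (isometry_smul X g)).symm

theorem inv_smul_mem_projSet (g : G) (hp : p ∈ projSet (g • A) x) :
    g⁻¹ • p ∈ projSet A (g⁻¹ • x) := by
  simpa using smul_mem_projSet_smul g⁻¹ hp

theorem IsContractingSet.smul {K : ℝ} (hA : IsContractingSet K A) (g : G) :
    IsContractingSet K (g • A) where
  pos := hA.pos
  projSet_nonempty x := by
    obtain ⟨p, hp⟩ := hA.projSet_nonempty (g⁻¹ • x)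
    exact ⟨g • p, by simpa using smul_mem_projSet_smul g hp⟩
  dist_lt {f x y} hf hfar p q hp hq := by
    have hfar' (t : ℝ) (ht : t ∈ Set.Icc 0 (dist (g⁻¹ • x) (g⁻¹ • y))) :
        K ≤ Metric.infDist (g⁻¹ • f t) A := by
      rw [dist_smul] at ht
      have := Metric.infDist_image (t := A) (x := g⁻¹ • f t) (isometry_smul X g)
      exact (hfar t ht).trans_eq (by simpa using this)
    simpa only [dist_smul] using
      hA.dist_lt (hf.smul g⁻¹) hfar' (inv_smul_mem_projSet g hp) (inv_smul_mem_projSet g hq)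

end ContractingSet

section Axis

variable {X : Type*} [MetricSpace X] {K : ℝ}

theorem IsQuasigeodesicZ.tendsto_dist_cofinite {γ : ℤ → X} (hγ : IsQuasigeodesicZ K γ)
    (hK : 0 < K) (x : X) : Tendsto (fun i => dist x (γ i)) cofinite atTop := by
  have hlower (i : ℤ) : ‖i‖ / K - (K + dist x (γ 0)) ≤ dist x (γ i) := by
    have h := (hγ i 0).1
    rw [Int.cast_zero, sub_zero, ← Int.norm_eq_abs] at h
    linarith [dist_triangle_left (γ i) (γ 0) x]
  refine tendsto_atTop_mono hlower
    (tendsto_atTop_add_const_right _ _ (Tendsto.atTop_div_const hK ?_))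
  rw [← cocompact_eq_cofinite]
  exact tendsto_norm_cocompact_atTop

theorem IsContractingAxisZ.isContractingSet_range {γ : ℤ → X} (hγ : IsContractingAxisZ K γ)
    (hK : 0 < K) : IsContractingSet K (Set.range γ) where
  pos := hK
  projSet_nonempty x := by
    obtain ⟨i, hi⟩ := (hγ.1.tendsto_dist_cofinite hK x).exists_forall_le
    exact ⟨γ i, ⟨i, rfl⟩, le_antisymm
      ((Metric.le_infDist (Set.range_nonempty γ)).2 (Set.forall_mem_range.2 hi))
      (Metric.infDist_le_dist_of_mem ⟨i, rfl⟩)⟩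
  dist_lt {f x y} hf hfar p q hp hq := by
    have hpm : p ∈ projSetOf (Set.range γ) (f '' Set.Icc 0 (dist x y)) :=
      Set.mem_biUnion ⟨0, ⟨le_rfl, dist_nonneg⟩, hf.1⟩ hp
    have hqm : q ∈ projSetOf (Set.range γ) (f '' Set.Icc 0 (dist x y)) :=
      Set.mem_biUnion ⟨dist x y, ⟨dist_nonneg, le_rfl⟩, hf.2.1⟩ hq
    have h := (Metric.edist_le_ediam_of_mem hpm hqm).trans_lt (hγ.2 f x y hf hfar)
    rwa [edist_dist, ENNReal.ofReal_lt_ofReal_iff hK] at h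

variable {G : Type*} [Group G] [MulAction G X] {o : X} {g : G}

theorem IsQuasigeodesicZ.exists_forall_le_dist_zpow (hg : IsQuasigeodesicZ K fun i : ℤ => g ^ i • o)
    (hK : 0 < K) (R : ℝ) :
    ∃ n : ℕ, 0 < n ∧ ∀ j : ℤ, j ≠ 0 → R ≤ dist o ((g ^ n) ^ j • o) := by
  have hfin : {i : ℤ | ¬ R ≤ dist o (g ^ i • o)}.Finite :=
    (hg.tendsto_dist_cofinite hK o).eventually_ge_atTop R
  obtain ⟨n, hn⟩ := (hfin.image Int.natAbs).bddAbove
  refine ⟨n + 1, n.succ_pos, fun j hj => ?_⟩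
  by_contra hR
  rw [← zpow_natCast, ← zpow_mul] at hR
  have hle : (n + 1) * j.natAbs ≤ n := by
    simpa only [Int.natAbs_mul, Int.natAbs_natCast] using hn (Set.mem_image_of_mem _ hR)
  nlinarith [Int.natAbs_pos.2 hj]

theorem mem_stabilizer_zorbit (o : X) (g : G) : g ∈ MulAction.stabilizer G (zorbit o g) := by
  rw [MulAction.mem_stabilizer_iff, zorbit, Set.smul_set_range]
  simpa only [Function.comp_def, Equiv.coe_addLeft, zpow_one_add, mul_smul] using
    (Equiv.addLeft (1 : ℤ)).surjective.range_comp fun i : ℤ => g ^ i • o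

end Axis

section SchottkyAxes

open scoped ENNReal

theorem excess_le_ofReal {X : Type*} [PseudoMetricSpace X] {o x z : X} {c : ℝ}
    (h : dist x o + dist o z ≤ dist x z + c) : excess o x z ≤ ENNReal.ofReal c := by
  simp only [excess, edist_dist]
  rw [← ENNReal.ofReal_add dist_nonneg dist_nonneg, ← ENNReal.ofReal_sub _ dist_nonneg]
  exact ENNReal.ofReal_le_ofReal (sub_le_iff_le_add'.2 h)

variable {G X : Type*} [Group G] [MetricSpace X] [MulAction G X] [IsIsometricSMul G X]
  {o : X} {K D : ℝ} {P H : Set X}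

theorem projSetOf_smul_subset_closedBall (hgeo : IsGeodesicSpace X) (hP : IsContractingSet K P)
    (hH : IsContractingSet K H) (hPH : projSetOf P H ⊆ Metric.closedBall o D)
    (hHP : projSetOf H P ⊆ Metric.closedBall o D) {f : G} (hf : f • P = P)
    (hfar : 2 * D + K ≤ dist o (f • o)) :
    projSetOf H (f • H) ⊆ Metric.closedBall o (D + 6 * K) := by
  rintro p hp
  obtain ⟨x, hx, hpx⟩ := Set.mem_iUnion₂.1 hp
  obtain ⟨z, hz, rfl⟩ := hx
  obtain ⟨q, hq⟩ := hP.projSet_nonempty z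
  obtain ⟨r, hr⟩ := hP.projSet_nonempty p
  have hfq : f • q ∈ projSet P (f • z) := hf ▸ smul_mem_projSet_smul f hq
  obtain ⟨s, hs⟩ := hH.projSet_nonempty (f • q)
  have hqo : dist (f • q) (f • o) ≤ D := (dist_smul f q o).trans_le (hPH (Set.mem_biUnion hz hq))
  have hro : dist r o ≤ D := hPH (Set.mem_biUnion hpx.1 hr)
  have hso : dist s o ≤ D := hHP (Set.mem_biUnion hfq.1 hs)
  have hqr : K ≤ dist (f • q) r := by
    linarith [dist_triangle4 o r (f • q) (f • o), dist_comm o r, dist_comm r (f • q)]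
  have hps := hP.dist_projSet_projSet_le hH hgeo hpx hfq hr hqr hs
  exact Metric.mem_closedBall.2 (by linarith [dist_triangle p s o])

theorem dist_le_or_dist_smul_le (hgeo : IsGeodesicSpace X) (hH : IsContractingSet K H) {f : G}
    (hf : projSetOf H (f • H) ⊆ Metric.closedBall o D)
    (hf_inv : projSetOf H (f⁻¹ • H) ⊆ Metric.closedBall o D) {x p q : X}
    (hp : p ∈ projSet H x) (hq : q ∈ projSet H (f • x)) :
    dist p o ≤ D + 6 * K ∨ dist q o ≤ D + 6 * K := by
  refine or_iff_not_imp_right.2 fun hqo => ?_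
  have hq' : f⁻¹ • q ∈ projSet (f⁻¹ • H) x := by simpa using smul_mem_projSet_smul f⁻¹ hq
  obtain ⟨r, hr⟩ := (hH.smul f⁻¹).projSet_nonempty p
  obtain ⟨s, hs⟩ := hH.projSet_nonempty (f⁻¹ • q)
  have hfr : f • r ∈ projSet H (f • p) := by simpa using inv_smul_mem_projSet f⁻¹ hr
  have hro : dist (f • r) o ≤ D := hf (Set.mem_biUnion (Set.smul_mem_smul_set hp.1) hfr)
  have hso : dist s o ≤ D := hf_inv (Set.mem_biUnion (Set.smul_mem_smul_set hq.1) hs)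
  have hqr : K ≤ dist (f⁻¹ • q) r := by
    rw [← dist_smul f, smul_inv_smul]
    linarith [dist_triangle q (f • r) o, hH.pos]
  have hps := (hH.smul f⁻¹).dist_projSet_projSet_le hH hgeo hp hq' hr hqr hs
  linarith [dist_triangle p s o]

theorem subsingleton_setOf_not_exists_dist_le {ι : Type*} (hgeo : IsGeodesicSpace X)
    (hH : IsContractingSet K H) {a : G} {e : ι → ℤ} (he : Function.Injective e)
    (ha : ∀ j : ℤ, j ≠ 0 → projSetOf H (a ^ j • H) ⊆ Metric.closedBall o D) (x : X) :
    {i | ¬ ∃ p ∈ projSet H (a ^ e i • x), dist p o ≤ D + 6 * K}.Subsingleton := by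
  intro i hi j hj
  by_contra hij
  obtain ⟨p, hp⟩ := hH.projSet_nonempty (a ^ e i • x)
  obtain ⟨q, hq⟩ := hH.projSet_nonempty (a ^ e j • x)
  have hq' : q ∈ projSet H (a ^ (e j - e i) • a ^ e i • x) := by
    rwa [← mul_smul, ← zpow_add, sub_add_cancel]
  have hne : e j - e i ≠ 0 := sub_ne_zero.2 (he.ne (Ne.symm hij))
  rcases dist_le_or_dist_smul_le hgeo hH (ha _ hne)
    (zpow_neg a _ ▸ ha _ (neg_ne_zero.2 hne)) hp hq' with hpo | hqo
  · exact hi ⟨p, hp, hpo⟩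
  · exact hj ⟨q, hq, hqo⟩

theorem excess_smul_le_of_mem_projSet (hgeo : IsGeodesicSpace X) (hH : IsContractingSet K H)
    {f : G} (hf : f • H = H) (hfar : 2 * D + K ≤ dist o (f • o)) {x y p q : X}
    (hp : p ∈ projSet H x) (hq : q ∈ projSet H y) (hpo : dist p o ≤ D) (hqo : dist q o ≤ D) :
    excess o x (f • y) ≤ ENNReal.ofReal (4 * K + 2 * D + dist o (f • o)) := by
  have hfq : f • q ∈ projSet H (f • y) := hf ▸ smul_mem_projSet_smul f hq
  have hfqo : dist (f • q) (f • o) ≤ D := (dist_smul f q o).trans_le hqo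
  have hpq : K ≤ dist p (f • q) := by
    linarith [dist_triangle4 o p (f • q) (f • o), dist_comm o p]
  refine excess_le_ofReal ?_
  linarith [hH.dist_add_dist_le hgeo hp hfq hpq, dist_triangle x p o,
    dist_triangle4 (f • y) (f • q) (f • o) o, dist_comm (f • y) o, dist_comm (f • o) o]

theorem exists_isSchottky_zpow_mul_mul_zpow {ι : Type*} [Finite ι] (hgeo : IsGeodesicSpace X)
    (hH : IsContractingSet K H) {a f : G}
    (ha : ∀ j : ℤ, j ≠ 0 → projSetOf H (a ^ j • H) ⊆ Metric.closedBall o D) (hf : f • H = H)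
    (hfar : 2 * (D + 6 * K) + K ≤ dist o (f • o)) {e e' : ι → ℤ}
    (he : Function.Injective e) (he' : Function.Injective e') :
    ∃ C ≠ ∞, IsSchottky o C fun i => a ^ e i * f * a ^ e' i := by
  have := Fintype.ofFinite ι
  refine ⟨2 * ∑ i, displacement o (a ^ e i) +
    ENNReal.ofReal (4 * K + 2 * (D + 6 * K) + dist o (f • o)), ?_,
    fun x i => ∃ p ∈ projSet H (a ^ (-e i) • x), dist p o ≤ D + 6 * K,
    fun y i => ∃ q ∈ projSet H (a ^ e' i • y), dist q o ≤ D + 6 * K,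
    subsingleton_setOf_not_exists_dist_le hgeo hH (neg_injective.comp he) ha,
    subsingleton_setOf_not_exists_dist_le hgeo hH he' ha, ?_⟩
  · simp [ENNReal.mul_eq_top, displacement, edist_ne_top]
  · rintro x i y ⟨p, hp, hpo⟩ ⟨q, hq, hqo⟩
    simp only [mul_assoc, mul_smul]
    refine (excess_smul_le o x _ _).trans ?_
    gcongr
    · exact Finset.single_le_sum (f := fun i => displacement o (a ^ e i)) (fun _ _ => zero_le)
        (Finset.mem_univ i)
    · rw [← zpow_neg]
      exact excess_smul_le_of_mem_projSet hgeo hH hf hfar hp hq hpo hqo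

namespace IndependentPair

theorem exists_isSchottky {ι : Type*} [Finite ι] {g h : G} (hgh : IndependentPair o g h)
    (hgeo : IsGeodesicSpace X) {e e' : ι → ℤ} (he : Function.Injective e)
    (he' : Function.Injective e') :
    ∃ m n : ℕ, 0 < m ∧ ∃ C ≠ ∞, IsSchottky o C fun i => (g ^ m) ^ e i * h ^ n * (g ^ m) ^ e' i := by
  obtain ⟨⟨K₁, hK₁, hg⟩, ⟨K₂, hK₂, hh⟩, hgh, hhg⟩ := hgh
  obtain ⟨D₁, hD₁⟩ := hgh.subset_closedBall o
  obtain ⟨D₂, hD₂⟩ := hhg.subset_closedBall o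
  have hK₁' : 0 < K₁ := zero_lt_one.trans hK₁
  have hK₂' : 0 < K₂ := zero_lt_one.trans hK₂
  have hP := (hg.isContractingSet_range hK₁').mono (le_max_left K₁ K₂)
  have hH := (hh.isContractingSet_range hK₂').mono (le_max_right K₁ K₂)
  set K := max K₁ K₂
  set D := max D₁ D₂
  obtain ⟨m, hm, hm_far⟩ := hg.1.exists_forall_le_dist_zpow hK₁' (2 * D + K)
  obtain ⟨n, -, hn_far⟩ :=
    hh.1.exists_forall_le_dist_zpow hK₂' (2 * (D + 6 * K + 6 * K) + K)
  refine ⟨m, n, hm, exists_isSchottky_zpow_mul_mul_zpow (H := zorbit o h) hgeo hH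
    (fun j hj => projSetOf_smul_subset_closedBall hgeo hP hH
      (hD₁.trans (Metric.closedBall_subset_closedBall (le_max_left _ _)))
      (hD₂.trans (Metric.closedBall_subset_closedBall (le_max_right _ _)))
      (zpow_mem (pow_mem (mem_stabilizer_zorbit o g) m) j) (hm_far j hj))
    (pow_mem (mem_stabilizer_zorbit o h) n) ?_ he he'⟩
  simpa using hn_far 1 one_ne_zero

theorem exists_hasDeviationBound {g h : G} (hgh : IndependentPair o g h)
    (hgeo : IsGeodesicSpace X) {p : PMF G} (hg : g ∈ Subsemigroup.closure p.support)
    (hh : h ∈ Subsemigroup.closure p.support) (hp : lmean p (displacement o) ≠ ∞) :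
    ∃ C ≠ ∞, HasDeviationBound o p C := by
  obtain ⟨k, hk, hgk⟩ := exists_mem_support_walkLaw hg
  obtain ⟨l, -, hhl⟩ := exists_mem_support_walkLaw hh
  -- The exponents `i` and `16 - i` add up to `16`, so that all elements of the family are
  -- positions of the walk at one and the same time.
  have he : Function.Injective fun i : Fin 16 => ((i : ℕ) : ℤ) := by
    intro i j hij; dsimp only at hij; omega
  have he' : Function.Injective fun i : Fin 16 => ((16 - i : ℕ) : ℤ) := by
    intro i j hij; dsimp only at hij; omega
  obtain ⟨m, n, hm, C, hC, hs⟩ := hgh.exists_isSchottky hgeo he he'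
  have hsupp (i : Fin 16) : (g ^ m) ^ ((i : ℕ) : ℤ) * h ^ n * (g ^ m) ^ ((16 - i : ℕ) : ℤ) ∈
      (walkLaw p (16 * (m * k) + n * l)).support := by
    have hga := pow_mem_support_walkLaw hgk m
    have hmem := mul_mem_support_walkLaw (mul_mem_support_walkLaw
      (pow_mem_support_walkLaw hga i) (pow_mem_support_walkLaw hhl n))
      (pow_mem_support_walkLaw hga (16 - i))
    rwa [add_right_comm, ← add_mul, Nat.add_sub_cancel' i.is_le', ← zpow_natCast (g ^ m) i,
      ← zpow_natCast (g ^ m) (16 - i)] at hmem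
  obtain ⟨C', hC', hbound⟩ :=
    hs.exists_hasDeviationBound hC hsupp (lmean_walkLaw_displacement_ne_top hp _)
  refine ⟨_, ?_, hbound.of_walkLaw (by positivity)⟩
  simp [hC', ENNReal.mul_eq_top, lmean_walkLaw_displacement_ne_top hp]

end IndependentPair

end SchottkyAxes

section EscapeRate

open scoped ENNReal

theorem ofReal_abs_sub {a b : ℝ} (ha : 0 ≤ a) (hb : 0 ≤ b) :
    ENNReal.ofReal |a - b| = ENNReal.ofReal a - ENNReal.ofReal b +
      (ENNReal.ofReal b - ENNReal.ofReal a) := by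
  rw [← ENNReal.ofReal_sub _ hb, ← ENNReal.ofReal_sub _ ha]
  rcases le_total a b with hab | hab
  · rw [abs_of_nonpos (sub_nonpos.2 hab), neg_sub, ENNReal.ofReal_of_nonpos (sub_nonpos.2 hab),
      zero_add]
  · rw [abs_of_nonneg (sub_nonneg.2 hab), ENNReal.ofReal_of_nonpos (sub_nonpos.2 hab), add_zero]

theorem iInf_succ_div_le_add {u v : ℕ → ℝ} {e : ℝ} (hu : ∀ n, 0 ≤ u n)
    (huv : ∀ n : ℕ, u n ≤ v n + n * e) :
    ⨅ n : ℕ, u (n + 1) / (n + 1 : ℝ) ≤ (⨅ n : ℕ, v (n + 1) / (n + 1 : ℝ)) + e := by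
  have hbdd : BddBelow (Set.range fun n : ℕ => u (n + 1) / (n + 1 : ℝ)) :=
    ⟨0, Set.forall_mem_range.2 fun n => div_nonneg (hu _) n.cast_add_one_pos.le⟩
  refine sub_le_iff_le_add.1 (le_ciInf fun n => sub_le_iff_le_add.2 ((ciInf_le hbdd n).trans ?_))
  have hpos : (0 : ℝ) < n + 1 := n.cast_add_one_pos
  rw [div_add' _ _ _ hpos.ne', div_le_div_iff_of_pos_right hpos, mul_comm e]
  exact_mod_cast huv (n + 1)

namespace IsProbMeasure

section Law

variable {G : Type*} {μ : G → ℝ}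

/-- The law with real densities `μ`, as a `PMF`. -/
noncomputable def toPMF (hμ : IsProbMeasure μ) : PMF G :=
  ⟨fun g => ENNReal.ofReal (μ g), by
    rw [ENNReal.summable.hasSum_iff, ← ENNReal.ofReal_tsum_of_nonneg hμ.1 hμ.2.1, hμ.2.2,
      ENNReal.ofReal_one]⟩

theorem toPMF_apply (hμ : IsProbMeasure μ) (g : G) : hμ.toPMF g = ENNReal.ofReal (μ g) :=
  rfl

theorem support_toPMF (hμ : IsProbMeasure μ) : hμ.toPMF.support = {g | 0 < μ g} := by
  ext g
  rw [PMF.mem_support_iff, toPMF_apply, ENNReal.ofReal_ne_zero_iff, Set.mem_ofPred_eq]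

theorem convPow_eq_toReal [Group G] (hμ : IsProbMeasure μ) (n : ℕ) (g : G) :
    convPow μ n g = (walkLaw hμ.toPMF n g).toReal := by
  induction n generalizing g with
  | zero => by_cases hg : g = 1 <;> simp [convPow, walkLaw_zero, hg]
  | succ n ih =>
    have hmap (h : G) : (walkLaw hμ.toPMF n).map (h * ·) g = walkLaw hμ.toPMF n (h⁻¹ * g) := by
      rw [PMF.map_apply, tsum_eq_single (h⁻¹ * g)]
      · rw [mul_inv_cancel_left, if_pos rfl]
      · exact fun k hk => if_neg fun hg => hk (eq_inv_mul_of_mul_eq hg.symm)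
    rw [walkLaw_succ, PMF.bind_apply, ENNReal.tsum_toReal_eq fun h =>
      ENNReal.mul_ne_top (PMF.apply_ne_top _ _) (PMF.apply_ne_top _ _)]
    refine tsum_congr fun h => ?_
    rw [hmap, ENNReal.toReal_mul, toPMF_apply, ENNReal.toReal_ofReal (hμ.1 h), ih]

end Law

variable {G X : Type*} [Group G] [MetricSpace X] [MulAction G X] {o : X} {μ μ' : G → ℝ}

theorem firstMoment_convPow (o : X) (hμ : IsProbMeasure μ) (n : ℕ) :
    firstMoment o (convPow μ n) = (lmean (walkLaw hμ.toPMF n) (displacement o)).toReal := by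
  have hne (g : G) : walkLaw hμ.toPMF n g * displacement o g ≠ ∞ :=
    ENNReal.mul_ne_top (PMF.apply_ne_top _ _) (edist_ne_top _ _)
  rw [lmean, ENNReal.tsum_toReal_eq hne]
  simp only [firstMoment, hμ.convPow_eq_toReal, ENNReal.toReal_mul, displacement, dist_edist]

theorem lmean_displacement_ne_top (hμ : IsProbMeasure μ) (hL : HasFiniteFirstMoment o μ) :
    lmean hμ.toPMF (displacement o) ≠ ∞ := by
  simpa only [lmean, displacement, toPMF_apply, edist_dist, ENNReal.ofReal_mul (hμ.1 _)] using
    hL.tsum_ofReal_ne_top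

theorem weightedDist_eq_enorm01_sub (o : X) (hμ : IsProbMeasure μ) (hμ' : IsProbMeasure μ') :
    weightedDist (fun g => 1 + displacement o g) hμ'.toPMF hμ.toPMF =
      enorm01 o fun g => μ' g - μ g := by
  refine tsum_congr fun g => ?_
  rw [ENNReal.ofReal_mul (by positivity), ENNReal.ofReal_add zero_le_one dist_nonneg,
    ENNReal.ofReal_one, ofReal_abs_sub (hμ'.1 g) (hμ.1 g), ← edist_dist, mul_comm]
  rfl

theorem weightedDist_displacement_add_le (hμ : IsProbMeasure μ) (hμ' : IsProbMeasure μ')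
    (C : ℝ≥0∞) :
    weightedDist (fun g => displacement o g + C) hμ'.toPMF hμ.toPMF ≤
      (C + 1) * enorm01 o fun g => μ' g - μ g := by
  rw [← weightedDist_eq_enorm01_sub o hμ hμ', weightedDist, weightedDist, ← ENNReal.tsum_mul_left]
  refine ENNReal.tsum_le_tsum fun g => ?_
  rw [mul_left_comm]
  gcongr
  calc displacement o g + C ≤ displacement o g + C + (C * displacement o g + 1) := le_self_add
    _ = (C + 1) * (1 + displacement o g) := by ring

theorem escapeRate_le_add (hμ : IsProbMeasure μ) (hμ' : IsProbMeasure μ') {e : ℝ≥0∞} (he : e ≠ ∞)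
    (hfin : ∀ n, lmean (walkLaw hμ.toPMF n) (displacement o) ≠ ∞)
    (hle : ∀ n : ℕ, lmean (walkLaw hμ'.toPMF n) (displacement o) ≤
      lmean (walkLaw hμ.toPMF n) (displacement o) + n * e) :
    escapeRate o μ' ≤ escapeRate o μ + e.toReal := by
  refine iInf_succ_div_le_add (u := fun n => firstMoment o (convPow μ' n))
    (v := fun n => firstMoment o (convPow μ n)) (fun n => ?_) fun n => ?_
  · rw [hμ'.firstMoment_convPow]
    exact ENNReal.toReal_nonneg
  · have hne : (n : ℝ≥0∞) * e ≠ ∞ := ENNReal.mul_ne_top (ENNReal.natCast_ne_top n) he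
    rw [hμ.firstMoment_convPow, hμ'.firstMoment_convPow, ← ENNReal.toReal_natCast,
      ← ENNReal.toReal_mul, ← ENNReal.toReal_add (hfin n) hne]
    exact ENNReal.toReal_mono (ENNReal.add_ne_top.2 ⟨hfin n, hne⟩) (hle n)

end IsProbMeasure

variable {G X : Type*} [Group G] [MetricSpace X] [MulAction G X] [IsIsometricSMul G X] {o : X}
  {μ μ' : G → ℝ} {C : ℝ≥0∞}

theorem HasDeviationBound.abs_escapeRate_sub_le (hμ : IsProbMeasure μ) (hμ' : IsProbMeasure μ')
    (h : HasDeviationBound o hμ.toPMF C) (hC : C ≠ ∞) (hL : HasFiniteFirstMoment o μ)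
    (hfin : enorm01 o (fun g => μ' g - μ g) ≠ ∞) :
    |escapeRate o μ' - escapeRate o μ| ≤
      (C + 1).toReal * (enorm01 o fun g => μ' g - μ g).toReal := by
  set e := (C + 1) * enorm01 o fun g => μ' g - μ g with he_def
  have he : e ≠ ∞ := ENNReal.mul_ne_top (by simp [hC]) hfin
  have hdist := hμ.weightedDist_displacement_add_le hμ' (o := o) C
  have hle (n : ℕ) : lmean (walkLaw hμ'.toPMF n) (displacement o) ≤
      lmean (walkLaw hμ.toPMF n) (displacement o) + n * e :=
    (h.lmean_displacement_le_add hμ'.toPMF n).trans (by gcongr)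
  have hge (n : ℕ) : lmean (walkLaw hμ.toPMF n) (displacement o) ≤
      lmean (walkLaw hμ'.toPMF n) (displacement o) + n * e :=
    (h.le_lmean_displacement_add hμ'.toPMF n).trans (by gcongr)
  have hne (n : ℕ) : lmean (walkLaw hμ.toPMF n) (displacement o) ≠ ∞ :=
    lmean_walkLaw_displacement_ne_top (hμ.lmean_displacement_ne_top hL) n
  have hne' (n : ℕ) : lmean (walkLaw hμ'.toPMF n) (displacement o) ≠ ∞ :=
    ne_top_of_le_ne_top (ENNReal.add_ne_top.2
      ⟨hne n, ENNReal.mul_ne_top (ENNReal.natCast_ne_top n) he⟩) (hle n)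
  rw [← ENNReal.toReal_mul, ← he_def, abs_sub_le_iff, sub_le_iff_le_add', sub_le_iff_le_add']
  exact ⟨hμ.escapeRate_le_add hμ' he hne hle, hμ'.escapeRate_le_add hμ he hne' hge⟩

end EscapeRate

theorem escape_rate_lipschitz_general {G X : Type*} [Group G] [MetricSpace X] [MulAction G X]
    [IsIsometricSMul G X] (o : X) (hgeo : IsGeodesicSpace X) {μ : G → ℝ} (hμ : IsProbMeasure μ)
    (hne : NonElementary o μ) (hL : HasFiniteFirstMoment o μ) :
    ∃ C : ℝ, 0 < C ∧ ∀ μ' : G → ℝ, IsProbMeasure μ' → enorm01 o (fun g => μ' g - μ g) ≠ ⊤ →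
      |escapeRate o μ' - escapeRate o μ| ≤ C * (enorm01 o (fun g => μ' g - μ g)).toReal := by
  obtain ⟨g, h, hg, hh, hgh⟩ := hne
  rw [← hμ.support_toPMF] at hg hh
  obtain ⟨C, hC, hbound⟩ :=
    hgh.exists_hasDeviationBound hgeo hg hh (hμ.lmean_displacement_ne_top hL)
  exact ⟨(C + 1).toReal, ENNReal.toReal_pos (by simp) (by simp [hC]), fun μ' hμ' hfin =>
    hbound.abs_escapeRate_sub_le hμ hμ' hC hL hfin⟩

/-- Lipschitz continuity of the escape rate (Theorem 1.2). -/
theorem escape_rate_lipschitz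
    {G X : Type*} [Group G] [Countable G] [MetricSpace X] [MulAction G X]
    (o : X) (hgeo : IsGeodesicSpace X)
    (hiso : ∀ g : G, Isometry fun x : X => g • x)
    (hind : HasIndepContracting G o)
    (μ : G → ℝ) (hμ : IsProbMeasure μ) (hne : NonElementary o μ)
    (hL : HasFiniteFirstMoment o μ) :
    ∃ C : ℝ, 0 < C ∧ ∃ ε : ℝ, 0 < ε ∧
      ∀ μ' : G → ℝ, IsProbMeasure μ' →
        enorm01 o (fun g => μ' g - μ g) < ENNReal.ofReal ε →
        |escapeRate o μ' - escapeRate o μ| ≤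
          C * (enorm01 o (fun g => μ' g - μ g)).toReal := by
  have : IsIsometricSMul G X := ⟨hiso⟩
  obtain ⟨C, hC, hlip⟩ := escape_rate_lipschitz_general o hgeo hμ hne hL
  exact ⟨C, hC, 1, one_pos, fun μ' hμ' hclose => hlip μ' hμ' hclose.ne_top⟩
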